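/- (Strong duality.) Let z* ∈ X, u* ∈ ℝ^s with u* ≥ 0 and v* ∈ ℝ^r with v* ≥ 0. Then the two conditions [∇g(z*) + Σᵢ uᵢ* ∇gᵢ(z*) + Σⱼ vⱼ* ∇hⱼ(z*) = 0 and uᵢ* gᵢ(z*) = 0 for all i] hold if and only if g(z*) ≤ L(z; u*, v*) for every z ∈ E (i.e. g(z*) equals the dual value θ₊(u*, v*)). Furthermore, in that case g(z*) ≤ g(z) for every z ∈ X, i.e. z* is a global optimal solution of minimizing g over X. -/

import Mathlib

/-!
Write `L` for the Lagrangian at the given multipliers. Since the inequality multipliers are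
nonnegative, `L z ≤ g z` at every feasible point `z` (weak duality), with equality exactly under
complementary slackness; and since `L` is convex, stationarity at `zs` says precisely that `zs`
minimizes `L`. Together, stationarity and complementary slackness say that `L zs = g zs` and that
`L zs` is the minimum of `L`, which for a feasible `zs` is just `g zs ≤ L z` for all `z`. Chaining
this with weak duality shows that `zs` is optimal.
-/

open Set Topology

section Convex

lemma convexOn_sum {𝕜 E β ι : Type*} [Semiring 𝕜] [PartialOrder 𝕜] [AddCommMonoid E]
    [AddCommMonoid β] [PartialOrder β] [IsOrderedAddMonoid β] [SMul 𝕜 E] [Module 𝕜 β]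
    {S : Set E} {F : ι → E → β} {t : Finset ι} (hS : Convex 𝕜 S)
    (hF : ∀ i ∈ t, ConvexOn 𝕜 S (F i)) : ConvexOn 𝕜 S (∑ i ∈ t, F i) :=
  Finset.sum_induction F (ConvexOn 𝕜 S) (fun _ _ => ConvexOn.add) (convexOn_const 0 hS) hF

variable {E : Type*} [NormedAddCommGroup E] [NormedSpace ℝ E] {S : Set E} {f : E → ℝ}
  {f' : E →L[ℝ] ℝ} {a z : E}

lemma apply_sub_le_sub_of_convexOn_of_hasFDerivWithinAt (hf : ConvexOn ℝ S f)
    (hf' : HasFDerivWithinAt f f' S a) (ha : a ∈ S) (hz : z ∈ S) :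
    f' (z - a) ≤ f z - f a := by
  let line : ℝ →ᵃ[ℝ] E := AffineMap.lineMap a z
  have line_zero : line 0 = a := AffineMap.lineMap_apply_zero a z
  have line_one : line 1 = z := AffineMap.lineMap_apply_one a z
  have hconv : ConvexOn ℝ (line ⁻¹' S) (f ∘ line) := hf.comp_affineMap line
  have hderiv : HasDerivWithinAt (f ∘ line) (f' (z - a)) (line ⁻¹' S) 0 :=
    HasFDerivWithinAt.comp_hasDerivWithinAt (t := S) 0 (by rwa [line_zero])
      AffineMap.hasDerivWithinAt_lineMap (mapsTo_preimage line S)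
  have hslope : f' (z - a) ≤ slope (f ∘ line) 0 1 :=
    hconv.le_slope_of_hasDerivWithinAt (by simpa [line_zero]) (by simpa [line_one]) one_pos hderiv
  simpa [slope_def_field, line_zero, line_one] using hslope

lemma isMinOn_iff_eq_zero_of_convexOn_of_hasFDerivAt (hf : ConvexOn ℝ S f)
    (hf' : HasFDerivAt f f' a) (hS : S ∈ 𝓝 a) : IsMinOn f S a ↔ f' = 0 := by
  refine ⟨fun hmin => (hmin.isLocalMin hS).hasFDerivAt_eq_zero hf', ?_⟩
  rintro rfl z hz
  simpa using apply_sub_le_sub_of_convexOn_of_hasFDerivWithinAt hf hf'.hasFDerivWithinAt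
    (mem_of_mem_nhds hS) hz

end Convex

section Lagrangian

variable {E ι κ : Type*} {g : E → ℝ} {G : ι → E → ℝ} {H : κ → E → ℝ} {u : ι → ℝ} {v : κ → ℝ}
  {z zs : E}

/-- The feasible set of the program with inequality constraints `G i ≤ 0` and equality constraints
`H j = 0`. -/
def feasibleSet (G : ι → E → ℝ) (H : κ → E → ℝ) : Set E :=
  {z | (∀ i, G i z ≤ 0) ∧ (∀ j, H j z = 0)}

lemma mul_nonpos_of_mem_feasibleSet (hu : ∀ i, 0 ≤ u i) (hz : z ∈ feasibleSet G H) (i : ι) :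
    u i * G i z ≤ 0 :=
  mul_nonpos_of_nonneg_of_nonpos (hu i) (hz.1 i)

variable [Fintype ι] [Fintype κ]

/-- The Lagrange function of the program "minimize `g` over `feasibleSet G H`", as a function of the
point alone: the multipliers `u` of the inequalities and `v` of the equalities are parameters. -/
def lagrangian (g : E → ℝ) (G : ι → E → ℝ) (H : κ → E → ℝ) (u : ι → ℝ) (v : κ → ℝ) (z : E) : ℝ :=
  g z + ∑ i, u i * G i z + ∑ j, v j * H j z

lemma lagrangian_of_mem_feasibleSet (hz : z ∈ feasibleSet G H) :
    lagrangian g G H u v z = g z + ∑ i, u i * G i z := by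
  simp [lagrangian, hz.2]

lemma lagrangian_le_of_mem_feasibleSet (hu : ∀ i, 0 ≤ u i) (hz : z ∈ feasibleSet G H) :
    lagrangian g G H u v z ≤ g z := by
  rw [lagrangian_of_mem_feasibleSet hz, add_le_iff_nonpos_right]
  exact Finset.sum_nonpos fun i _ => mul_nonpos_of_mem_feasibleSet hu hz i

lemma lagrangian_eq_iff_of_mem_feasibleSet (hu : ∀ i, 0 ≤ u i) (hz : z ∈ feasibleSet G H) :
    lagrangian g G H u v z = g z ↔ ∀ i, u i * G i z = 0 := by
  rw [lagrangian_of_mem_feasibleSet hz, add_eq_left,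
    Finset.sum_eq_zero_iff_of_nonpos fun i _ => mul_nonpos_of_mem_feasibleSet hu hz i]
  simp only [Finset.mem_univ, true_imp_iff]

lemma forall_le_lagrangian_iff_of_mem_feasibleSet (hu : ∀ i, 0 ≤ u i)
    (hzs : zs ∈ feasibleSet G H) :
    (∀ z, g zs ≤ lagrangian g G H u v z) ↔
      IsMinOn (lagrangian g G H u v) univ zs ∧ lagrangian g G H u v zs = g zs := by
  have hle : lagrangian g G H u v zs ≤ g zs := lagrangian_le_of_mem_feasibleSet hu hzs
  rw [isMinOn_univ_iff]
  exact ⟨fun h => ⟨fun z => hle.trans (h z), hle.antisymm (h zs)⟩, fun h z => h.2 ▸ h.1 z⟩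

lemma convexOn_lagrangian [AddCommMonoid E] [Module ℝ E] {S : Set E} (hg : ConvexOn ℝ S g)
    (hG : ∀ i, ConvexOn ℝ S (G i)) (hH : ∀ j, ConvexOn ℝ S (H j)) (hu : ∀ i, 0 ≤ u i)
    (hv : ∀ j, 0 ≤ v j) : ConvexOn ℝ S (lagrangian g G H u v) := by
  have hsum : ConvexOn ℝ S (g + ∑ i, u i • G i + ∑ j, v j • H j) :=
    (hg.add (convexOn_sum hg.1 fun i _ => (hG i).smul (hu i))).add
      (convexOn_sum hg.1 fun j _ => (hH j).smul (hv j))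
  refine hsum.congr fun z _ => ?_
  simp [lagrangian]

variable [NormedAddCommGroup E] [NormedSpace ℝ E]

lemma hasFDerivAt_lagrangian {g' : E →L[ℝ] ℝ} {G' : ι → E →L[ℝ] ℝ} {H' : κ → E →L[ℝ] ℝ}
    (hg : HasFDerivAt g g' z) (hG : ∀ i, HasFDerivAt (G i) (G' i) z)
    (hH : ∀ j, HasFDerivAt (H j) (H' j) z) :
    HasFDerivAt (lagrangian g G H u v) (g' + ∑ i, u i • G' i + ∑ j, v j • H' j) z :=
  (hg.add (HasFDerivAt.fun_sum fun i _ => (hG i).const_mul (u i))).add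
    (HasFDerivAt.fun_sum fun j _ => (hH j).const_mul (v j))

/-- Convexity is imposed on the Lagrangian as a whole so as to include affine equality constraints
with multipliers of either sign. -/
theorem stmt_13_general (hgd : DifferentiableAt ℝ g zs) (hGd : ∀ i, DifferentiableAt ℝ (G i) zs)
    (hHd : ∀ j, DifferentiableAt ℝ (H j) zs) (hzs : zs ∈ feasibleSet G H) (hu : ∀ i, 0 ≤ u i)
    (hconv : ConvexOn ℝ univ (lagrangian g G H u v)) :
    (((fderiv ℝ g zs + ∑ i, u i • fderiv ℝ (G i) zs
        + ∑ j, v j • fderiv ℝ (H j) zs = 0) ∧ (∀ i, u i * G i zs = 0)) ↔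
      (∀ z, g zs ≤ lagrangian g G H u v z)) ∧
    ((∀ z, g zs ≤ lagrangian g G H u v z) → ∀ z ∈ feasibleSet G H, g zs ≤ g z) := by
  have hderiv := hasFDerivAt_lagrangian (u := u) (v := v) hgd.hasFDerivAt
    (fun i => (hGd i).hasFDerivAt) (fun j => (hHd j).hasFDerivAt)
  constructor
  · rw [forall_le_lagrangian_iff_of_mem_feasibleSet hu hzs,
      isMinOn_iff_eq_zero_of_convexOn_of_hasFDerivAt hconv hderiv Filter.univ_mem,
      lagrangian_eq_iff_of_mem_feasibleSet hu hzs]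
  · exact fun hdual z hz => (hdual z).trans (lagrangian_le_of_mem_feasibleSet hu hz)

end Lagrangian

/-- Theorem 7(iv) (strong duality): at a feasible `zs` with multipliers
`u ≥ 0`, `v ≥ 0`, stationarity together with complementary slackness holds if
and only if `g zs ≤ L(z; u, v)` for all `z` (i.e. `g zs = θ₊(u, v)`); moreover,
in that case `zs` is a global minimizer of `g` over `X`. -/
theorem stmt_13 {n s r : ℕ}
    (g : EuclideanSpace ℝ (Fin n) → ℝ)
    (G : Fin s → EuclideanSpace ℝ (Fin n) → ℝ)
    (H : Fin r → EuclideanSpace ℝ (Fin n) → ℝ)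
    (hg : ConvexOn ℝ Set.univ g) (hgd : Differentiable ℝ g)
    (hG : ∀ i, ConvexOn ℝ Set.univ (G i)) (hGd : ∀ i, Differentiable ℝ (G i))
    (hH : ∀ j, ConvexOn ℝ Set.univ (H j)) (hHd : ∀ j, Differentiable ℝ (H j))
    (X : Set (EuclideanSpace ℝ (Fin n)))
    (hX : X = {z | (∀ i, G i z ≤ 0) ∧ (∀ j, H j z = 0)})
    (zs : EuclideanSpace ℝ (Fin n)) (hzs : zs ∈ X)
    (L : EuclideanSpace ℝ (Fin n) → ℝ)
    (u : Fin s → ℝ) (v : Fin r → ℝ) (hu : ∀ i, 0 ≤ u i) (hv : ∀ j, 0 ≤ v j)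
    (hL : ∀ z, L z = g z + ∑ i, u i * G i z + ∑ j, v j * H j z) :
    (((fderiv ℝ g zs + ∑ i, u i • fderiv ℝ (G i) zs
        + ∑ j, v j • fderiv ℝ (H j) zs = 0) ∧ (∀ i, u i * G i zs = 0)) ↔
      (∀ z, g zs ≤ L z)) ∧
    ((∀ z, g zs ≤ L z) → ∀ z ∈ X, g zs ≤ g z) := by
  obtain rfl : L = lagrangian g G H u v := funext hL
  obtain rfl : X = feasibleSet G H := hX
  exact stmt_13_general (hgd zs) (hGd · zs) (hHd · zs) hzs hu (convexOn_lagrangian hg hG hH hu hv)
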